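/- arXiv:2405.06122 — 2 statements merged into one kernel-verified Lean document; each statement's English description precedes it below -/
import Mathlib

section
/- Let u₀, u₁, u₂ and P₀, P₁, P₂ be vectors in Fin 3 → ℝ, and let Z be the 3×3 matrix over the dual numbers 𝔻 whose i-th row is the Study vector ζ(uᵢ, Pᵢ), i.e. Z i j = uᵢ j + ((uᵢ ×₃ Pᵢ) j)·ε. Then Z is a unit in the matrix ring Matrix (Fin 3) (Fin 3) 𝔻 (equivalently, the rows ζ(uᵢ, Pᵢ) form a basis of the free 𝔻-module Fin 3 → 𝔻) if and only if the determinant of the real 3×3 matrix with rows u₀, u₁, u₂ is nonzero. (This says that three affine lines in ℝ³ span the projective plane over the dual numbers if and only if their direction vectors are linearly independent.) -/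
open scoped DualNumber

/-- The Study vector `ζ(u, r) : Fin 3 → 𝔻` of the affine line `{r + t u}` in `ℝ³`:
its `i`-th entry is `u i + ((u ×₃ r) i)·ε`. -/
noncomputable def studyVector (u r : Fin 3 → ℝ) : Fin 3 → DualNumber ℝ :=
  fun i => TrivSqZeroExt.inl (u i) + TrivSqZeroExt.inl ((crossProduct u r) i) * DualNumber.eps

theorem isUnit_matrix_map_iff {n R S : Type*} [Fintype n] [DecidableEq n] [CommRing R]
    [CommRing S] (f : R →+* S) [IsLocalHom f] (A : Matrix n n R) :
    IsUnit (A.map f) ↔ IsUnit A := by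
  rw [Matrix.isUnit_iff_isUnit_det, ← RingHom.mapMatrix_apply, ← RingHom.map_det,
    isUnit_map_iff, ← Matrix.isUnit_iff_isUnit_det]

instance isLocalHom_trivSqZeroExt_fstHom (S R M : Type*) [CommSemiring S] [Semiring R]
    [AddCommGroup M] [Algebra S R] [Module S M] [Module R M] [Module Rᵐᵒᵖ M]
    [SMulCommClass R Rᵐᵒᵖ M] [IsScalarTower S R M] [IsScalarTower S Rᵐᵒᵖ M] :
    IsLocalHom (TrivSqZeroExt.fstHom S R M).toRingHom where
  map_nonunit _ := TrivSqZeroExt.isUnit_iff_isUnit_fst.mpr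

/-- Study matrices are the case `R = M = ℝ`: the moments `uᵢ ×₃ Pᵢ` lie in the square-zero part,
which invertibility does not see. -/
theorem studyVector_matrix_isUnit_iff_general {n R M : Type*} [Fintype n] [DecidableEq n]
    [CommRing R] [AddCommGroup M] [Module R M] [Module Rᵐᵒᵖ M] [IsCentralScalar R M]
    (A : Matrix n n (TrivSqZeroExt R M)) :
    IsUnit A ↔ IsUnit (A.map TrivSqZeroExt.fst).det :=
  (isUnit_matrix_map_iff (TrivSqZeroExt.fstHom R R M).toRingHom A).symm.trans
    (Matrix.isUnit_iff_isUnit_det _)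

theorem fst_studyVector (u r : Fin 3 → ℝ) (i : Fin 3) : (studyVector u r i).fst = u i := by
  simp [studyVector]

theorem map_fst_studyVector_matrix (u₀ u₁ u₂ P₀ P₁ P₂ : Fin 3 → ℝ) :
    (Matrix.of ![studyVector u₀ P₀, studyVector u₁ P₁, studyVector u₂ P₂]).map
      TrivSqZeroExt.fst = Matrix.of ![u₀, u₁, u₂] := by
  ext i j
  fin_cases i <;> exact fst_studyVector _ _ j

/-- The 3×3 matrix over the dual numbers whose rows are the Study
vectors `ζ(uᵢ, Pᵢ)` of three affine lines in `ℝ³` is a unit iff the determinant of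
the real matrix with rows `u₀, u₁, u₂` (the direction vectors) is nonzero. -/
theorem studyVector_matrix_isUnit_iff
    (u₀ u₁ u₂ P₀ P₁ P₂ : Fin 3 → ℝ) :
    IsUnit (Matrix.of ![studyVector u₀ P₀, studyVector u₁ P₁, studyVector u₂ P₂] :
        Matrix (Fin 3) (Fin 3) (DualNumber ℝ)) ↔
      (Matrix.of ![u₀, u₁, u₂] : Matrix (Fin 3) (Fin 3) ℝ).det ≠ 0 := by
  rw [studyVector_matrix_isUnit_iff_general, map_fst_studyVector_matrix, isUnit_iff_ne_zero]
end

section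
/- Let R be a stably finite ring and d ≥ 1. Let v : ℤ → (Fin d → R) be a polygon in the sense that for every k ∈ ℤ the matrix with rows v k, v (k+1), …, v (k+d−1) is a unit in Matrix (Fin d) (Fin d) R. Then there exist coefficients α : Fin d → (ℤ → R) such that α 0 j is a unit of R for every j ∈ ℤ and v (j + d) = Σ_{i=0}^{d-1} (α i j) • v (j + i) for all j ∈ ℤ. (Hence every polygon is annihilated by a properly bounded difference operator of degree d.) -/
/-- A ring `R` is stably finite if for every `n`, every surjective `R`-linear
endomorphism of the free module `Fin n → R` is injective. -/
def StablyFinite (R : Type*) [Ring R] : Prop :=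
  ∀ n : ℕ, ∀ f : (Fin n → R) →ₗ[R] (Fin n → R), Function.Surjective f → Function.Injective f

/-!
If two bases of a module differ in one vector only, then the coordinate functionals `f` and `g`
belonging to the exchanged vectors `x` and `y` are proportional, since each vanishes on all vectors
of the other basis but one: `g = f · g x` and `f = g · f y`. Evaluating at `x` and at `y` shows
that `g x` is a two-sided inverse of `f y`. For a polygon this applies to two successive windows,
with `x = v j` and `y = v (j + d)`, and `f y` is the zeroth coefficient of the recurrence.
-/

open Module

section ExchangeOfBasisVectors

variable {R M : Type*} [Semiring R] [AddCommMonoid M] [Module R M]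

lemma linearMap_apply_eq_coord_smul {N ι : Type*} [AddCommMonoid N] [Module R N]
    (b : Basis ι R M) {i : ι} {f : M →ₗ[R] N} (hf : ∀ k ≠ i, f (b k) = 0) (x : M) :
    f x = b.coord i x • f (b i) := by
  suffices h : f = (b.coord i).smulRight (f (b i)) from LinearMap.congr_fun h x
  refine b.ext fun k => ?_
  obtain rfl | hk := eq_or_ne k i
  · simp
  · simp [hf k hk, hk]

lemma isUnit_coord_of_coord_eq_zero {ι κ : Type*} (b : Basis ι R M) (c : Basis κ R M)
    {i : ι} {k : κ} (hb : ∀ l ≠ i, c.coord k (b l) = 0) (hc : ∀ l ≠ k, b.coord i (c l) = 0) :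
    IsUnit (b.coord i (c k)) := by
  have hbc : b.coord i (c k) * c.coord k (b i) = 1 := by
    simpa using (linearMap_apply_eq_coord_smul b hb (c k)).symm
  have hcb : c.coord k (b i) * b.coord i (c k) = 1 := by
    simpa using (linearMap_apply_eq_coord_smul c hc (b i)).symm
  exact ⟨⟨_, _, hbc, hcb⟩, rfl⟩

lemma isUnit_coord_zero_last_of_castSucc_eq_succ {n : ℕ} (b c : Basis (Fin (n + 1)) R M)
    (h : ∀ m : Fin n, c m.castSucc = b m.succ) : IsUnit (b.coord 0 (c (Fin.last n))) := by
  refine isUnit_coord_of_coord_eq_zero b c (fun l hl => ?_) fun l hl => ?_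
  · obtain ⟨m, rfl⟩ := Fin.exists_succ_eq.2 hl
    simp [← h, Fin.castSucc_ne_last]
  · obtain ⟨m, rfl⟩ := Fin.exists_castSucc_eq.2 hl
    simp [h]

end ExchangeOfBasisVectors

lemma exists_basis_eq_row_of_isUnit {R ι : Type*} [Semiring R] [Fintype ι] [DecidableEq ι]
    {A : Matrix ι ι R} (hA : IsUnit A) : ∃ b : Basis ι R (ι → R), ∀ i, b i = A i := by
  obtain ⟨B, hAB, hBA⟩ := isUnit_iff_exists.1 hA
  refine ⟨(Pi.basisFun R ι).map (Matrix.toLinearEquivRight'OfInv hBA hAB), fun i => ?_⟩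
  rw [Basis.map_apply, Pi.basisFun_apply]
  exact Matrix.single_one_vecMul i A

theorem polygon_satisfies_properly_bounded_recurrence_general
    {R M : Type*} [Semiring R] [AddCommMonoid M] [Module R M] {d : ℕ} (hd : 1 ≤ d) (v : ℤ → M)
    (hv : ∀ k : ℤ, ∃ b : Basis (Fin d) R M, ∀ i : Fin d, b i = v (k + (i.val : ℤ))) :
    ∃ α : Fin d → ℤ → R,
      (∀ j : ℤ, IsUnit (α ⟨0, hd⟩ j)) ∧
      ∀ j : ℤ, v (j + (d : ℤ)) = ∑ i : Fin d, α i j • v (j + (i.val : ℤ)) := by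
  choose b hb using hv
  refine ⟨fun i j => (b j).coord i (v (j + d)), fun j => ?_, fun j => ?_⟩
  · obtain ⟨n, rfl⟩ := Nat.exists_eq_add_of_le' hd
    have hoverlap (m : Fin n) : b (j + 1) m.castSucc = b j m.succ := by
      simp [hb, add_left_comm, add_comm]
    have hlast : v (j + (n + 1 : ℕ)) = b (j + 1) (Fin.last n) := by
      simp [hb, add_left_comm, add_comm]
    change IsUnit ((b j).coord 0 (v (j + (n + 1 : ℕ))))
    rw [hlast]
    exact isUnit_coord_zero_last_of_castSucc_eq_succ (b j) (b (j + 1)) hoverlap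
  · simpa only [hb, Basis.coord_apply] using ((b j).sum_repr (v (j + d))).symm

/-- Over a stably finite ring, every polygon `v : ℤ → (Fin d → R)`
(each `d` consecutive terms form a basis, i.e. the matrix with those rows is a
unit) satisfies a recurrence `v (j + d) = Σ_{i<d} (α i j) • v (j + i)` whose
zeroth coefficient `α 0 j` is a unit for every `j`; i.e., every polygon is
annihilated by a properly bounded difference operator of degree `d`. -/
theorem polygon_satisfies_properly_bounded_recurrence
    {R : Type*} [Ring R] (hSF : StablyFinite R) {d : ℕ} (hd : 1 ≤ d)
    (v : ℤ → Fin d → R)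
    (hv : ∀ k : ℤ, IsUnit (Matrix.of (fun i : Fin d => v (k + (i.val : ℤ))) :
        Matrix (Fin d) (Fin d) R)) :
    ∃ α : Fin d → ℤ → R,
      (∀ j : ℤ, IsUnit (α ⟨0, hd⟩ j)) ∧
      ∀ j : ℤ, v (j + (d : ℤ)) = ∑ i : Fin d, α i j • v (j + (i.val : ℤ)) :=
  polygon_satisfies_properly_bounded_recurrence_general hd v fun k =>
    exists_basis_eq_row_of_isUnit (hv k)
end
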